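/- Along the iterates of soft zero-sum Markov-game policy iteration with any step size η ∈ (0,1], the values are monotonically nonincreasing and bounded below by the equilibrium value: v* ≤ v_{k+1} ≤ v_k componentwise for all k ≥ 0, where v_k = v^{μ_k,ν_k} and v* is the unique fixed point of T. -/

import Mathlib

/-!
The values `v_k` are compared with one another and with `vstar` through the maximum principle for
`x ↦ γ M x`, `M` row-stochastic and `0 < γ < 1`: `x ≤ γ M x` forces `x ≤ 0` (`nonpos_of_le_mulVec`,
by looking at a maximal coordinate). Together with the fixed-policy Bellman equation
(`vVal_eq_Tpol`) it gives the usual comparison principle: `T^{μ,ν} w ≤ w` implies `v^{μ,ν} ≤ w`,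
and `w ≤ T^{μ,ν} w` implies `w ≤ v^{μ,ν}`.

* Optimality of `μ_k` against `ν_k` yields `T^{μ,ν_k} v_k ≤ v_k` for every `μ`: otherwise changing
  `μ_k` at a single state would strictly improve the value (`Tpol_le_of_optimal`).
* The operator is affine in `ν`, so `T^{μ,ν_{k+1}} v_k` is the `(1-η, η)`-mixture of
  `T^{μ,ν_k} v_k ≤ v_k` and `T^{μ,ν'} v_k ≤ sup_μ T^{μ,ν'} v_k ≤ sup_μ T^{μ,ν_k} v_k ≤ v_k`.
  Hence `T^{μ_{k+1},ν_{k+1}} v_k ≤ v_k` and the comparison principle gives `v_{k+1} ≤ v_k`.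
* With `D = max (vstar - v_k)`, for every `μ` one has
  `inf_ν T^{μ,ν} vstar ≤ T^{μ,ν_k} vstar ≤ T^{μ,ν_k} v_k + γ D ≤ v_k + γ D`; taking the supremum
  over `μ` gives `D ≤ γ D`, so `D ≤ 0`.
-/

open MeasureTheory

/-- Expected one-step reward `r^{μ,ν}(s) = ∫_A ∫_B r(s,a,b) dν(s)(b) dμ(s)(a)`. -/
noncomputable def rPol {S A B : Type*} [MeasurableSpace A] [MeasurableSpace B]
    (r : S → A → B → ℝ)
    (μ : S → ProbabilityMeasure A) (ν : S → ProbabilityMeasure B) (s : S) : ℝ :=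
  ∫ a, ∫ b, r s a b ∂(ν s : Measure B) ∂(μ s : Measure A)

/-- Induced stochastic matrix `P^{μ,ν}(s,s') = ∫_A ∫_B P(s'|s,a,b) dν(s)(b) dμ(s)(a)`. -/
noncomputable def Pmat {S A B : Type*} [Fintype S] [MeasurableSpace A] [MeasurableSpace B]
    (P : S → S → A → B → ℝ)
    (μ : S → ProbabilityMeasure A) (ν : S → ProbabilityMeasure B) : Matrix S S ℝ :=
  Matrix.of fun s s' => ∫ a, ∫ b, P s s' a b ∂(ν s : Measure B) ∂(μ s : Measure A)

/-- Fixed-policy Bellman operator `T^{μ,ν} v = r^{μ,ν} + γ P^{μ,ν} v`. -/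
noncomputable def Tpol {S A B : Type*} [Fintype S] [MeasurableSpace A] [MeasurableSpace B]
    (γ : ℝ) (r : S → A → B → ℝ) (P : S → S → A → B → ℝ)
    (μ : S → ProbabilityMeasure A) (ν : S → ProbabilityMeasure B)
    (v : S → ℝ) : S → ℝ :=
  fun s => rPol r μ ν s + γ * (Pmat P μ ν).mulVec v s

/-- Value of the pair of stationary policies: `v^{μ,ν} = Σ_{t≥0} γ^t (P^{μ,ν})^t r^{μ,ν}`. -/
noncomputable def vVal {S A B : Type*} [Fintype S] [DecidableEq S]
    [MeasurableSpace A] [MeasurableSpace B]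
    (γ : ℝ) (r : S → A → B → ℝ) (P : S → S → A → B → ℝ)
    (μ : S → ProbabilityMeasure A) (ν : S → ProbabilityMeasure B) : S → ℝ :=
  ∑' t : ℕ, γ ^ t • ((Pmat P μ ν ^ t).mulVec (rPol r μ ν))

/-! ### Discounted stochastic matrices -/

section Stochastic

variable {S : Type*} [Fintype S]

theorem mulVec_le_of_stochastic {M : Matrix S S ℝ} (h0 : ∀ s s', 0 ≤ M s s')
    (h1 : ∀ s, ∑ s', M s s' = 1) {x : S → ℝ} {D : ℝ} (hx : ∀ s, x s ≤ D) (s : S) :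
    M.mulVec x s ≤ D := by
  calc M.mulVec x s = ∑ s', M s s' * x s' := rfl
    _ ≤ ∑ s', M s s' * D :=
      Finset.sum_le_sum fun s' _ => mul_le_mul_of_nonneg_left (hx s') (h0 s s')
    _ = D := by rw [← Finset.sum_mul, h1, one_mul]

theorem abs_mulVec_le_of_stochastic {M : Matrix S S ℝ} (h0 : ∀ s s', 0 ≤ M s s')
    (h1 : ∀ s, ∑ s', M s s' = 1) {x : S → ℝ} {D : ℝ} (hx : ∀ s, |x s| ≤ D) (s : S) :
    |M.mulVec x s| ≤ D := by
  refine abs_le'.2 ⟨mulVec_le_of_stochastic h0 h1 (fun s => (abs_le'.1 (hx s)).1) s, ?_⟩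
  have := mulVec_le_of_stochastic h0 h1 (x := -x) (fun s => (abs_le'.1 (hx s)).2) s
  simpa [Matrix.mulVec_neg] using this

/-- If every upper bound `D` of `x` improves to `γ * D`, then `x ≤ 0`: take for `D` the largest
coordinate of `x`. -/
theorem nonpos_of_le_of_forall_le {γ : ℝ} (hγ : γ < 1) {x : S → ℝ}
    (h : ∀ D, (∀ s, x s ≤ D) → ∀ s, x s ≤ γ * D) (s : S) : x s ≤ 0 := by
  have : Nonempty S := ⟨s⟩
  obtain ⟨m, hm⟩ := Finite.exists_max x
  have := h (x m) hm m
  exact (hm s).trans (by nlinarith)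

/-- Maximum principle for the discounted stochastic matrix `γ M`. -/
theorem nonpos_of_le_mulVec {γ : ℝ} (hγ : γ ∈ Set.Ioo (0 : ℝ) 1) {M : Matrix S S ℝ}
    (h0 : ∀ s s', 0 ≤ M s s') (h1 : ∀ s, ∑ s', M s s' = 1) {x : S → ℝ}
    (h : ∀ s, x s ≤ γ * M.mulVec x s) (s : S) : x s ≤ 0 :=
  nonpos_of_le_of_forall_le hγ.2 (fun _ hD s => (h s).trans
    (mul_le_mul_of_nonneg_left (mulVec_le_of_stochastic h0 h1 hD s) hγ.1.le)) s

variable [DecidableEq S]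

theorem summable_discounted {γ : ℝ} (hγ : γ ∈ Set.Ioo (0 : ℝ) 1) {M : Matrix S S ℝ}
    (h0 : ∀ s s', 0 ≤ M s s') (h1 : ∀ s, ∑ s', M s s' = 1) (x : S → ℝ) :
    Summable fun t : ℕ => γ ^ t • (M ^ t).mulVec x := by
  have hb : ∀ (t : ℕ) (s : S), |(M ^ t).mulVec x s| ≤ ‖x‖ := by
    intro t
    induction t with
    | zero => intro s; simpa using norm_le_pi_norm x s
    | succ t ih =>
      intro s
      rw [pow_succ', ← Matrix.mulVec_mulVec]
      exact abs_mulVec_le_of_stochastic h0 h1 ih s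
  refine Summable.of_norm_bounded
    ((summable_geometric_of_lt_one hγ.1.le hγ.2).mul_right ‖x‖) fun t => ?_
  rw [norm_smul, norm_pow, Real.norm_of_nonneg hγ.1.le]
  exact mul_le_mul_of_nonneg_left ((pi_norm_le_iff_of_nonneg (norm_nonneg _)).2 (hb t))
    (pow_nonneg hγ.1.le t)

theorem tsum_discounted_eq {γ : ℝ} (hγ : γ ∈ Set.Ioo (0 : ℝ) 1) {M : Matrix S S ℝ}
    (h0 : ∀ s s', 0 ≤ M s s') (h1 : ∀ s, ∑ s', M s s' = 1) (x : S → ℝ) :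
    ∑' t : ℕ, γ ^ t • (M ^ t).mulVec x
      = x + γ • M.mulVec (∑' t : ℕ, γ ^ t • (M ^ t).mulVec x) := by
  have hs := summable_discounted hγ h0 h1 x
  have hmap := (LinearMap.toContinuousLinearMap (Matrix.mulVecLin M)).map_tsum hs
  simp only [LinearMap.coe_toContinuousLinearMap', Matrix.mulVecLin_apply] at hmap
  rw [hmap, ← tsum_const_smul'', hs.tsum_eq_zero_add]
  congr 1
  · simp
  · refine tsum_congr fun t => ?_
    rw [Matrix.mulVec_smul, Matrix.mulVec_mulVec, ← pow_succ', smul_smul, ← pow_succ']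

end Stochastic

/-! ### Double integrals of continuous functions -/

section Integrals

variable {A B : Type*}
  [MetricSpace A] [CompactSpace A] [MeasurableSpace A] [BorelSpace A]
  [MetricSpace B] [CompactSpace B] [MeasurableSpace B] [BorelSpace B]

theorem integrable_slice {f : A → B → ℝ} (hf : Continuous fun p : A × B => f p.1 p.2)
    (ν : Measure B) [IsFiniteMeasure ν] (a : A) : Integrable (f a) ν := by
  have : Continuous (f a) := hf.comp (Continuous.prodMk_right a)
  exact this.integrable_of_hasCompactSupport (HasCompactSupport.of_compactSpace _)

theorem integrable_integral {f : A → B → ℝ} (hf : Continuous fun p : A × B => f p.1 p.2)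
    (μ : Measure A) [IsFiniteMeasure μ] (ν : Measure B) [IsFiniteMeasure ν] :
    Integrable (fun a => ∫ b, f a b ∂ν) μ := by
  have : Integrable (fun p : A × B => f p.1 p.2) (μ.prod ν) :=
    hf.integrable_of_hasCompactSupport (HasCompactSupport.of_compactSpace _)
  exact this.integral_prod_left

/-- The double integral is affine in the second measure. -/
theorem integral_mix {f : A → B → ℝ} (hf : Continuous fun p : A × B => f p.1 p.2)
    {η : ℝ} (hη : η ∈ Set.Ioc (0 : ℝ) 1) (μ : ProbabilityMeasure A)
    {ν₀ ν₁ ν₂ : ProbabilityMeasure B}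
    (hmix : (ν₂ : Measure B)
      = ENNReal.ofReal (1 - η) • (ν₀ : Measure B) + ENNReal.ofReal η • (ν₁ : Measure B)) :
    ∫ a, ∫ b, f a b ∂(ν₂ : Measure B) ∂(μ : Measure A)
      = (1 - η) * ∫ a, ∫ b, f a b ∂(ν₀ : Measure B) ∂(μ : Measure A)
        + η * ∫ a, ∫ b, f a b ∂(ν₁ : Measure B) ∂(μ : Measure A) := by
  have hinner : ∀ a, ∫ b, f a b ∂(ν₂ : Measure B)
      = (1 - η) * ∫ b, f a b ∂(ν₀ : Measure B) + η * ∫ b, f a b ∂(ν₁ : Measure B) := by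
    intro a
    rw [hmix, integral_add_measure
      ((integrable_slice hf _ a).smul_measure ENNReal.ofReal_ne_top)
      ((integrable_slice hf _ a).smul_measure ENNReal.ofReal_ne_top),
      integral_smul_measure, integral_smul_measure,
      ENNReal.toReal_ofReal (sub_nonneg.2 hη.2), ENNReal.toReal_ofReal hη.1.le]
    rfl
  simp_rw [hinner]
  rw [integral_add ((integrable_integral hf _ _).const_mul _)
    ((integrable_integral hf _ _).const_mul _), integral_const_mul, integral_const_mul]

end Integrals

/-! ### Bellman operators and values of stationary policies -/

section Game

variable {S A B : Type*} [Fintype S]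
  [MetricSpace A] [CompactSpace A] [MeasurableSpace A] [BorelSpace A]
  [MetricSpace B] [CompactSpace B] [MeasurableSpace B] [BorelSpace B]

theorem Pmat_nonneg {P : S → S → A → B → ℝ} (hP0 : ∀ s s' a b, 0 ≤ P s s' a b)
    (μ : S → ProbabilityMeasure A) (ν : S → ProbabilityMeasure B) (s s' : S) :
    0 ≤ Pmat P μ ν s s' :=
  integral_nonneg fun a => integral_nonneg fun b => hP0 s s' a b

theorem Pmat_sum {P : S → S → A → B → ℝ}
    (hPcont : ∀ s s', Continuous fun p : A × B => P s s' p.1 p.2)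
    (hPsum : ∀ s a b, ∑ s', P s s' a b = 1)
    (μ : S → ProbabilityMeasure A) (ν : S → ProbabilityMeasure B) (s : S) :
    ∑ s', Pmat P μ ν s s' = 1 := by
  simp only [Pmat, Matrix.of_apply]
  rw [← integral_finsetSum _ fun s' _ => integrable_integral (hPcont s s') _ _]
  have : ∀ a, ∑ s', ∫ b, P s s' a b ∂(ν s : Measure B) = 1 := by
    intro a
    rw [← integral_finsetSum _ fun s' _ => integrable_slice (hPcont s s') _ a]
    simp [hPsum]
  simp [this]

theorem exists_abs_rPol_le {r : S → A → B → ℝ}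
    (hr : ∀ s, Continuous fun p : A × B => r s p.1 p.2) (s : S) :
    ∃ C, ∀ (μ : S → ProbabilityMeasure A) (ν : S → ProbabilityMeasure B),
      |rPol r μ ν s| ≤ C := by
  obtain ⟨C, hC⟩ := isCompact_univ.exists_bound_of_continuousOn (hr s).continuousOn
  refine ⟨C, fun μ ν => ?_⟩
  have h1 : ∀ a, ‖∫ b, r s a b ∂(ν s : Measure B)‖ ≤ C := fun a => by
    simpa using norm_integral_le_of_norm_le_const (μ := (ν s : Measure B))
      (Filter.Eventually.of_forall fun b => hC (a, b) (Set.mem_univ _))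
  simpa [rPol] using norm_integral_le_of_norm_le_const (μ := (μ s : Measure A))
    (Filter.Eventually.of_forall h1)

/-- Boundedness over all policy pairs, so that the suprema and infima of `T^{μ,ν} v` over
policies are genuine. -/
theorem exists_abs_Tpol_le {γ : ℝ} (hγ : γ ∈ Set.Ioo (0 : ℝ) 1)
    {r : S → A → B → ℝ} (hr : ∀ s, Continuous fun p : A × B => r s p.1 p.2)
    {P : S → S → A → B → ℝ}
    (hPcont : ∀ s s', Continuous fun p : A × B => P s s' p.1 p.2)
    (hP0 : ∀ s s' a b, 0 ≤ P s s' a b) (hPsum : ∀ s a b, ∑ s', P s s' a b = 1)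
    (v : S → ℝ) (s : S) :
    ∃ C, ∀ (μ : S → ProbabilityMeasure A) (ν : S → ProbabilityMeasure B),
      |Tpol γ r P μ ν v s| ≤ C := by
  obtain ⟨C, hC⟩ := exists_abs_rPol_le hr s
  refine ⟨C + γ * ‖v‖, fun μ ν => (abs_add_le _ _).trans (add_le_add (hC μ ν) ?_)⟩
  rw [abs_mul, abs_of_pos hγ.1]
  exact mul_le_mul_of_nonneg_left (abs_mulVec_le_of_stochastic (Pmat_nonneg hP0 μ ν)
    (Pmat_sum hPcont hPsum μ ν) (norm_le_pi_norm v) s) hγ.1.le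

theorem Tpol_sub (γ : ℝ) (r : S → A → B → ℝ) (P : S → S → A → B → ℝ)
    (μ : S → ProbabilityMeasure A) (ν : S → ProbabilityMeasure B) (v w : S → ℝ) (s : S) :
    Tpol γ r P μ ν v s - Tpol γ r P μ ν w s = γ * (Pmat P μ ν).mulVec (v - w) s := by
  simp only [Tpol, Matrix.mulVec_sub, Pi.sub_apply]
  ring

theorem Tpol_mix {γ : ℝ} {r : S → A → B → ℝ}
    (hr : ∀ s, Continuous fun p : A × B => r s p.1 p.2) {P : S → S → A → B → ℝ}
    (hPcont : ∀ s s', Continuous fun p : A × B => P s s' p.1 p.2)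
    {η : ℝ} (hη : η ∈ Set.Ioc (0 : ℝ) 1) (μ : S → ProbabilityMeasure A)
    {ν₀ ν₁ ν₂ : S → ProbabilityMeasure B}
    (hmix : ∀ s, (ν₂ s : Measure B)
      = ENNReal.ofReal (1 - η) • (ν₀ s : Measure B) + ENNReal.ofReal η • (ν₁ s : Measure B))
    (v : S → ℝ) (s : S) :
    Tpol γ r P μ ν₂ v s = (1 - η) * Tpol γ r P μ ν₀ v s + η * Tpol γ r P μ ν₁ v s := by
  have hP : (Pmat P μ ν₂).mulVec v s
      = (1 - η) * (Pmat P μ ν₀).mulVec v s + η * (Pmat P μ ν₁).mulVec v s := by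
    simp only [Matrix.mulVec, dotProduct, Pmat, Matrix.of_apply, Finset.mul_sum,
      ← Finset.sum_add_distrib]
    refine Finset.sum_congr rfl fun s' _ => ?_
    rw [integral_mix (hPcont s s') hη (μ s) (hmix s)]
    ring
  have hR : rPol r μ ν₂ s = (1 - η) * rPol r μ ν₀ s + η * rPol r μ ν₁ s :=
    integral_mix (hr s) hη (μ s) (hmix s)
  simp only [Tpol, hP, hR]
  ring

/-- `T^{μ,ν} v (s)` depends on `μ` only through `μ s`. -/
theorem Tpol_congr (γ : ℝ) (r : S → A → B → ℝ) (P : S → S → A → B → ℝ)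
    {μ μ' : S → ProbabilityMeasure A} (ν : S → ProbabilityMeasure B) (v : S → ℝ) {s : S}
    (h : μ s = μ' s) : Tpol γ r P μ ν v s = Tpol γ r P μ' ν v s := by
  simp only [Tpol, rPol, Pmat, Matrix.mulVec, dotProduct, Matrix.of_apply, h]

variable [DecidableEq S]

/-- Fixed-policy Bellman equation. -/
theorem vVal_eq_Tpol {γ : ℝ} (hγ : γ ∈ Set.Ioo (0 : ℝ) 1) (r : S → A → B → ℝ)
    {P : S → S → A → B → ℝ}
    (hPcont : ∀ s s', Continuous fun p : A × B => P s s' p.1 p.2)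
    (hP0 : ∀ s s' a b, 0 ≤ P s s' a b) (hPsum : ∀ s a b, ∑ s', P s s' a b = 1)
    (μ : S → ProbabilityMeasure A) (ν : S → ProbabilityMeasure B) (s : S) :
    vVal γ r P μ ν s = Tpol γ r P μ ν (vVal γ r P μ ν) s :=
  congrFun (tsum_discounted_eq hγ (Pmat_nonneg hP0 μ ν) (Pmat_sum hPcont hPsum μ ν)
    (rPol r μ ν)) s

theorem vVal_le_of_Tpol_le {γ : ℝ} (hγ : γ ∈ Set.Ioo (0 : ℝ) 1) (r : S → A → B → ℝ)
    {P : S → S → A → B → ℝ}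
    (hPcont : ∀ s s', Continuous fun p : A × B => P s s' p.1 p.2)
    (hP0 : ∀ s s' a b, 0 ≤ P s s' a b) (hPsum : ∀ s a b, ∑ s', P s s' a b = 1)
    (μ : S → ProbabilityMeasure A) (ν : S → ProbabilityMeasure B) {w : S → ℝ}
    (h : ∀ s, Tpol γ r P μ ν w s ≤ w s) (s : S) : vVal γ r P μ ν s ≤ w s := by
  refine sub_nonpos.1 (nonpos_of_le_mulVec hγ (Pmat_nonneg hP0 μ ν)
    (Pmat_sum hPcont hPsum μ ν) (x := vVal γ r P μ ν - w) (fun s => ?_) s)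
  rw [← Tpol_sub γ r, ← vVal_eq_Tpol hγ r hPcont hP0 hPsum, Pi.sub_apply]
  exact sub_le_sub_left (h s) _

theorem le_vVal_of_le_Tpol {γ : ℝ} (hγ : γ ∈ Set.Ioo (0 : ℝ) 1) (r : S → A → B → ℝ)
    {P : S → S → A → B → ℝ}
    (hPcont : ∀ s s', Continuous fun p : A × B => P s s' p.1 p.2)
    (hP0 : ∀ s s' a b, 0 ≤ P s s' a b) (hPsum : ∀ s a b, ∑ s', P s s' a b = 1)
    (μ : S → ProbabilityMeasure A) (ν : S → ProbabilityMeasure B) {w : S → ℝ}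
    (h : ∀ s, w s ≤ Tpol γ r P μ ν w s) (s : S) : w s ≤ vVal γ r P μ ν s := by
  refine sub_nonpos.1 (nonpos_of_le_mulVec hγ (Pmat_nonneg hP0 μ ν)
    (Pmat_sum hPcont hPsum μ ν) (x := w - vVal γ r P μ ν) (fun s => ?_) s)
  rw [← Tpol_sub γ r, ← vVal_eq_Tpol hγ r hPcont hP0 hPsum, Pi.sub_apply]
  exact sub_le_sub_right (h s) _

/-- Monotonicity and `γ`-contraction of `T^{μ,ν}` in one inequality. -/
theorem Tpol_mono {γ : ℝ} (hγ : γ ∈ Set.Ioo (0 : ℝ) 1) (r : S → A → B → ℝ)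
    {P : S → S → A → B → ℝ}
    (hPcont : ∀ s s', Continuous fun p : A × B => P s s' p.1 p.2)
    (hP0 : ∀ s s' a b, 0 ≤ P s s' a b) (hPsum : ∀ s a b, ∑ s', P s s' a b = 1)
    (μ : S → ProbabilityMeasure A) (ν : S → ProbabilityMeasure B) {v w : S → ℝ} {D : ℝ}
    (h : ∀ s, v s - w s ≤ D) (s : S) :
    Tpol γ r P μ ν v s ≤ Tpol γ r P μ ν w s + γ * D := by
  rw [← sub_le_iff_le_add', Tpol_sub]
  exact mul_le_mul_of_nonneg_left (mulVec_le_of_stochastic (Pmat_nonneg hP0 μ ν)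
    (Pmat_sum hPcont hPsum μ ν) h s) hγ.1.le

/-- If `μ₀` is a best response to `ν` among stationary policies, its value satisfies the Bellman
optimality inequality, by the one-state policy improvement argument. -/
theorem Tpol_le_of_optimal {γ : ℝ} (hγ : γ ∈ Set.Ioo (0 : ℝ) 1) (r : S → A → B → ℝ)
    {P : S → S → A → B → ℝ}
    (hPcont : ∀ s s', Continuous fun p : A × B => P s s' p.1 p.2)
    (hP0 : ∀ s s' a b, 0 ≤ P s s' a b) (hPsum : ∀ s a b, ∑ s', P s s' a b = 1)
    {μ₀ : S → ProbabilityMeasure A} {ν : S → ProbabilityMeasure B}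
    (hopt : ∀ μ s, vVal γ r P μ ν s ≤ vVal γ r P μ₀ ν s)
    (μ : S → ProbabilityMeasure A) (s : S) :
    Tpol γ r P μ ν (vVal γ r P μ₀ ν) s ≤ vVal γ r P μ₀ ν s := by
  by_contra! hlt
  set v := vVal γ r P μ₀ ν with hv
  set μ' := Function.update μ₀ s (μ s) with hμ'
  have hs : Tpol γ r P μ' ν v s = Tpol γ r P μ ν v s := Tpol_congr γ r P ν v (by simp [hμ'])
  have himp : ∀ t, v t ≤ Tpol γ r P μ' ν v t := by
    intro t
    by_cases hts : t = s
    · rw [hts, hs]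
      exact hlt.le
    · rw [Tpol_congr γ r P ν v (show μ' t = μ₀ t by simp [hμ', hts])]
      exact (vVal_eq_Tpol hγ r hPcont hP0 hPsum μ₀ ν t).le
  have hle := le_vVal_of_le_Tpol hγ r hPcont hP0 hPsum μ' ν himp
  have hT := Tpol_mono hγ r hPcont hP0 hPsum μ' ν (D := 0) (fun t => sub_nonpos.2 (hle t)) s
  rw [← vVal_eq_Tpol hγ r hPcont hP0 hPsum, hs] at hT
  linarith [hopt μ' s]

end Game

theorem stmt10 {S A B : Type*} [Fintype S] [DecidableEq S]
    [MetricSpace A] [CompactSpace A] [Nonempty A] [MeasurableSpace A] [BorelSpace A]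
    [MetricSpace B] [CompactSpace B] [Nonempty B] [MeasurableSpace B] [BorelSpace B]
    (γ : ℝ) (hγ : γ ∈ Set.Ioo (0:ℝ) 1)
    (r : S → A → B → ℝ) (hr : ∀ s, Continuous fun p : A × B => r s p.1 p.2)
    (P : S → S → A → B → ℝ)
    (hPcont : ∀ s s', Continuous fun p : A × B => P s s' p.1 p.2)
    (hP0 : ∀ s s' a b, 0 ≤ P s s' a b) (hP1 : ∀ s s' a b, P s s' a b ≤ 1)
    (hPsum : ∀ s a b, ∑ s', P s s' a b = 1)
    (η : ℝ) (hη : η ∈ Set.Ioc (0:ℝ) 1)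
    (μseq : ℕ → S → ProbabilityMeasure A) (νseq ν'seq : ℕ → S → ProbabilityMeasure B)
    (hμ : ∀ (k : ℕ) (μ : S → ProbabilityMeasure A) (s : S),
        vVal γ r P μ (νseq k) s ≤ vVal γ r P (μseq k) (νseq k) s)
    (hν' : ∀ (k : ℕ) (ν : S → ProbabilityMeasure B) (s : S),
        (⨆ μ : S → ProbabilityMeasure A,
            Tpol γ r P μ (ν'seq k) (vVal γ r P (μseq k) (νseq k)) s)
          ≤ ⨆ μ : S → ProbabilityMeasure A,
            Tpol γ r P μ ν (vVal γ r P (μseq k) (νseq k)) s)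
    (hmix : ∀ (k : ℕ) (s : S), (νseq (k + 1) s : Measure B)
        = ENNReal.ofReal (1 - η) • (νseq k s : Measure B)
          + ENNReal.ofReal η • (ν'seq k s : Measure B))
    (vstar : S → ℝ)
    (hfix : ∀ s : S, (⨆ μ : S → ProbabilityMeasure A, ⨅ ν : S → ProbabilityMeasure B,
        Tpol γ r P μ ν vstar s) = vstar s)
    (huniq : ∀ w : S → ℝ,
        (∀ s : S, (⨆ μ : S → ProbabilityMeasure A, ⨅ ν : S → ProbabilityMeasure B,
            Tpol γ r P μ ν w s) = w s) → w = vstar)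
    :
    (∀ (k : ℕ) (s : S), vstar s ≤ vVal γ r P (μseq k) (νseq k) s)
    ∧ (∀ (k : ℕ) (s : S),
        vVal γ r P (μseq (k + 1)) (νseq (k + 1)) s ≤ vVal γ r P (μseq k) (νseq k) s) := by
  have : Nonempty (ProbabilityMeasure A) :=
    ⟨⟨Measure.dirac (Classical.arbitrary A), inferInstance⟩⟩
  have hopt : ∀ k μ s, Tpol γ r P μ (νseq k) (vVal γ r P (μseq k) (νseq k)) s
      ≤ vVal γ r P (μseq k) (νseq k) s := fun k =>
    Tpol_le_of_optimal hγ r hPcont hP0 hPsum (hμ k)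
  refine ⟨fun k s => ?_, fun k s => ?_⟩
  · refine sub_nonpos.1 (nonpos_of_le_of_forall_le hγ.2
      (x := fun s => vstar s - vVal γ r P (μseq k) (νseq k) s) (fun D hD s => ?_) s)
    rw [sub_le_iff_le_add, ← hfix s]
    refine ciSup_le fun μ => ?_
    obtain ⟨C, hC⟩ := exists_abs_Tpol_le hγ hr hPcont hP0 hPsum vstar s
    have hbdd : BddBelow (Set.range fun ν : S → ProbabilityMeasure B =>
        Tpol γ r P μ ν vstar s) := by
      refine ⟨-C, ?_⟩
      rintro _ ⟨ν, rfl⟩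
      exact (abs_le.1 (hC μ ν)).1
    linarith [ciInf_le hbdd (νseq k), hopt k μ s,
      Tpol_mono hγ r hPcont hP0 hPsum μ (νseq k) hD s]
  · refine vVal_le_of_Tpol_le hγ r hPcont hP0 hPsum _ _ (fun s => ?_) s
    rw [Tpol_mix hr hPcont hη _ (hmix k)]
    set v := vVal γ r P (μseq k) (νseq k) with hv
    obtain ⟨C, hC⟩ := exists_abs_Tpol_le hγ hr hPcont hP0 hPsum v s
    have hbdd : BddAbove (Set.range fun μ : S → ProbabilityMeasure A =>
        Tpol γ r P μ (ν'seq k) v s) := by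
      refine ⟨C, ?_⟩
      rintro _ ⟨μ, rfl⟩
      exact (abs_le.1 (hC μ _)).2
    have h1 : Tpol γ r P (μseq (k + 1)) (ν'seq k) v s ≤ v s :=
      (le_ciSup hbdd (μseq (k + 1))).trans
        ((hν' k (νseq k) s).trans (ciSup_le fun μ => hopt k μ s))
    have h2 : Tpol γ r P (μseq (k + 1)) (νseq k) v s ≤ v s := hopt k _ s
    nlinarith [mul_le_mul_of_nonneg_left h1 hη.1.le,
      mul_le_mul_of_nonneg_left h2 (sub_nonneg.2 hη.2)]
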